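/- If 𝔡 = ℵ1, i.e., there exists a dominating family of functions ω → ω of cardinality ℵ1, then there exists a maximal 3-ladder of cardinality ℵ1. -/

import Mathlib

/-- `P` is an `n`-ladder: a nonempty lower finite lattice in which every element
has at most `n` lower covers. -/
def IsNLadder (P : Type*) [Lattice P] (n : ℕ) : Prop :=
  Nonempty P ∧ (∀ x : P, (Set.Iic x).Finite) ∧ ∀ x : P, {y : P | y ⋖ x}.ncard ≤ n

/-- `P` is a maximal `n`-ladder: an `n`-ladder which is not order-isomorphic to
a proper ideal of any `n`-ladder. -/
def IsMaximalNLadder (P : Type u) [Lattice P] (n : ℕ) : Prop :=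
  IsNLadder P n ∧
    ¬ ∃ (Q : Type u) (_ : Lattice Q) (I : Order.Ideal Q),
        IsNLadder Q n ∧ I.IsProper ∧ Nonempty (P ≃o ↥I)

/-- `D` is a dominating family in `ω^ω`: every `f : ω → ω` is eventually
strictly below some member of `D`. -/
def IsDominating (D : Set (ℕ → ℕ)) : Prop :=
  ∀ f : ℕ → ℕ, ∃ g ∈ D, ∀ᶠ k in Filter.atTop, f k < g k

/-!
Let `K` be a 2-ladder of cardinality `ℵ₁`. A dominating family of cardinality `ℵ₁` yields functions
`t q : K → ℕ` for `q ∈ K` such that every sequence tending to infinity in `K` is eventually outgrown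
by some `t q`. Let `L` be the epigraph of a monotone `r : K → ℕ` with `t y z ≤ r x` for `y, z ≤ x`;
it is a 3-ladder.

If `L` were a proper ideal of a 3-ladder, then a point `p` outside `L` would induce the closure
operator `c` sending `x` to the greatest element of `L` below `x ⊔ p`. A 3-ladder has breadth at
most 3, so among any three elements of `L` one lies in the closure of every upper bound of the other
two. Since `r` dominates the functions `t q`, the closures of the points over a fixed `y ∈ K` stay
over the elements below some `B y ∈ K`. As `K` is uncountable and lower finite, there are `y, z ∈ K`
with `¬ z ≤ B y` and `¬ y ≤ B z`, and then `c` violates the breadth condition for a point over `y`,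
a point over `z` and a high point over `y ⊓ z`.
-/

open Cardinal Filter Order Set

theorem ncard_le_one_of_subsingleton {α : Type*} {s : Set α} (hs : s.Subsingleton) :
    s.ncard ≤ 1 :=
  (ncard_le_one hs.finite).2 fun _ hx _ hy => hs hx hy

theorem ncard_le_add_one_of_subsingleton_sep {α : Type*} {s : Set α} {p : α → Prop} {n : ℕ}
    (hp : {x ∈ s | p x}.Subsingleton) (hn : {x ∈ s | ¬ p x}.ncard ≤ n) : s.ncard ≤ n + 1 := by
  have hsplit : s = {x ∈ s | ¬ p x} ∪ {x ∈ s | p x} := by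
    ext x
    by_cases hx : p x <;> simp [hx]
  calc s.ncard ≤ {x ∈ s | ¬ p x}.ncard + {x ∈ s | p x}.ncard := by
        conv_lhs => rw [hsplit]
        exact ncard_union_le _ _
    _ ≤ n + 1 := add_le_add hn (ncard_le_one_of_subsingleton hp)

theorem finite_setOf_mem_and_le_of_injOn {α : Type*} {f : α → ℕ} {s : Set α} (hf : InjOn f s)
    (n : ℕ) : {a | a ∈ s ∧ f a ≤ n}.Finite :=
  Finite.of_finite_image ((finite_Iic n).subset (image_subset_iff.2 fun _ ha => ha.2))
    (hf.mono fun _ ha => ha.1)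

section LowerFinite

variable {P : Type*}

theorem eq_of_le_of_covBy [PartialOrder P] {x y z : P} (hy : y ⋖ x) (hz : z ⋖ x) (hyz : y ≤ z) :
    y = z :=
  hyz.eq_or_lt.resolve_right fun hlt => hy.2 hlt hz.lt

theorem exists_le_covBy_of_finite_Iic [PartialOrder P] (hfin : ∀ x : P, (Iic x).Finite) {x y : P}
    (hxy : x < y) : ∃ z, x ≤ z ∧ z ⋖ y := by
  have hIco : (Ico x y).Finite := (hfin y).subset fun z hz => hz.2.le
  obtain ⟨z, hxz, hz⟩ := hIco.exists_le_maximal (left_mem_Ico.2 hxy)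
  exact ⟨z, hxz, hz.prop.2, fun w hzw hwy => hz.not_gt ⟨hxz.trans hzw.le, hwy⟩ hzw⟩

theorem exists_forall_not_le_of_countable_Iic [Preorder P] [Uncountable P]
    (hcount : ∀ x : P, (Iic x).Countable) {s : Set P} (hs : s.Countable) :
    ∃ z, ∀ x ∈ s, ¬ z ≤ x := by
  by_contra! hcover
  have huniv : ⋃ x ∈ s, Iic x = Set.univ :=
    eq_univ_of_forall fun z => by simpa only [mem_iUnion₂, mem_Iic, exists_prop] using hcover z
  exact not_countable_univ (huniv ▸ hs.biUnion fun x _ => hcount x)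

theorem exists_not_le_and_not_le_of_finite_Iic [Preorder P] [Uncountable P]
    (hfin : ∀ x : P, (Iic x).Finite) (B : P → P) : ∃ y z, ¬ z ≤ B y ∧ ¬ y ≤ B z := by
  let s := Infinite.natEmbedding P
  obtain ⟨z, hz⟩ := exists_forall_not_le_of_countable_Iic (fun x => (hfin x).countable)
    (countable_range (B ∘ s))
  obtain ⟨n, hn⟩ : ∃ n, ¬ s n ≤ B z := by
    by_contra! hbounded
    exact infinite_range_of_injective s.injective
      ((hfin (B z)).subset (range_subset_iff.2 hbounded))
  exact ⟨s n, z, hz _ (mem_range_self n), hn⟩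

theorem tendsto_cofinite_of_monotone_of_unbounded [PartialOrder P] {ι : Type*} [Preorder ι]
    {x : ι → P} (hx : Monotone x) (hunbounded : ∀ B, ∃ i, ¬ x i ≤ B) :
    Tendsto x atTop cofinite := by
  refine le_cofinite_iff_eventually_ne.2 fun z => ?_
  obtain ⟨i, hi⟩ := hunbounded z
  refine eventually_map.2 ((eventually_ge_atTop i).mono fun j hij hjz => ?_)
  exact hi ((hx hij).trans_eq hjz)

theorem exists_orderHom_forall_le_of_finite_Iic [Preorder P] (hfin : ∀ x : P, (Iic x).Finite)
    (t : P → P → ℕ) : ∃ r : P →o ℕ, ∀ x, ∀ y ≤ x, ∀ z ≤ x, t y z ≤ r x := by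
  have hbdd (x : P) : BddAbove (image2 t (Iic x) (Iic x)) := ((hfin x).image2 t (hfin x)).bddAbove
  refine ⟨⟨fun x => sSup (image2 t (Iic x) (Iic x)), fun x x' hx => ?_⟩,
    fun x y hy z hz => le_csSup (hbdd x) (mem_image2_of_mem hy hz)⟩
  exact csSup_le_csSup' (hbdd x') (image2_subset (Iic_subset_Iic.2 hx) (Iic_subset_Iic.2 hx))

/-- In a join-semilattice with finite principal ideals and a least element, the meet of two elements
is the join of their finitely many common lower bounds. -/
@[reducible] noncomputable def latticeOfFiniteIic [SemilatticeSup P] [OrderBot P]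
    (hfin : ∀ x : P, (Iic x).Finite) : Lattice P where
  inf x y := ((hfin x).inter_of_left (Iic y)).toFinset.sup id
  inf_le_left _ _ := Finset.sup_le fun _ hz => ((Finite.mem_toFinset _).1 hz).1
  inf_le_right _ _ := Finset.sup_le fun _ hz => ((Finite.mem_toFinset _).1 hz).2
  le_inf _ _ _ hxy hxz := Finset.le_sup (f := id) ((Finite.mem_toFinset _).2 ⟨hxy, hxz⟩)

end LowerFinite

/-! ### Proper extensions of ladders and closure operators -/

namespace IsNLadder

variable {P : Type*} [Lattice P] {n : ℕ}

theorem finite_Iic (hP : IsNLadder P n) (x : P) : (Iic x).Finite := hP.2.1 x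

theorem finite_setOf_covBy (hP : IsNLadder P n) (x : P) : {y | y ⋖ x}.Finite :=
  (hP.finite_Iic x).subset fun _ hy => hy.le

/-- The join `T` of the family would otherwise have, for each `i`, a lower cover that is above all
`v j` with `j ≠ i` and not above `v i`. -/
theorem exists_forall_le_imp_le (hP : IsNLadder P n) {ι : Type*} [Fintype ι]
    (hι : n < Fintype.card ι) (v : ι → P) : ∃ i, ∀ u, (∀ j ≠ i, v j ≤ u) → v i ≤ u := by
  by_contra! hindep
  choose u hu hvu using hindep
  have : Nonempty ι := Fintype.card_pos_iff.1 (Nat.zero_lt_of_lt hι)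
  let T := Finset.univ.sup' Finset.univ_nonempty v
  have hvT (i : ι) : v i ≤ T := Finset.le_sup' v (Finset.mem_univ i)
  have hlt (i : ι) : u i ⊓ T < T := inf_lt_right.2 fun hTu => hvu i ((hvT i).trans hTu)
  choose w huw hwT using fun i => exists_le_covBy_of_finite_Iic hP.finite_Iic (hlt i)
  have hvw {i j : ι} (hji : j ≠ i) : v j ≤ w i := (le_inf (hu i j hji) (hvT j)).trans (huw i)
  have hinj : Function.Injective w := by
    intro i j hij
    by_contra hne
    refine (hwT i).lt.not_ge (Finset.sup'_le _ _ fun k _ => ?_)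
    by_cases hki : k = i
    · exact hij ▸ hvw (hki ▸ hne)
    · exact hvw hki
  have hcard : Fintype.card ι ≤ {y | y ⋖ T}.ncard := by
    rw [← Nat.card_eq_fintype_card, ← Set.ncard_univ, ← ncard_image_of_injective _ hinj]
    exact ncard_le_ncard (by simpa [range_subset_iff] using hwT) (hP.finite_setOf_covBy T)
  exact hι.not_ge (hcard.trans (hP.2.2 T))

theorem exists_isGreatest_inter_Iic (hP : IsNLadder P n) (I : Ideal P) {x t : P} (hx : x ∈ I)
    (hxt : x ≤ t) : ∃ y, IsGreatest (I ∩ Iic t) y := by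
  obtain ⟨y, hy⟩ := ((hP.finite_Iic t).inter_of_right I).exists_maximal ⟨x, hx, hxt⟩
  refine ⟨y, hy.prop, fun z hz => ?_⟩
  have hsup : y ⊔ z ∈ (I : Set P) ∩ Iic t := ⟨Ideal.sup_mem hy.prop.1 hz.1, sup_le hy.prop.2 hz.2⟩
  exact le_sup_right.trans (hy.le_of_ge hsup le_sup_left)

end IsNLadder

/-- Among any `n` elements there is one that lies in the closure of every upper bound of the others.
In terms of the lattice of closed elements this says that its breadth is less than `n`. -/
def BreadthLT {L : Type*} [PartialOrder L] (c : ClosureOperator L) (n : ℕ) : Prop :=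
  ∀ x : Fin n → L, ∃ i, ∀ u, (∀ j ≠ i, x j ≤ u) → x i ≤ c u

/-- For `q ∉ I` the operator sends `x` to the greatest element of `I` below `x ⊔ q`, and its breadth
is bounded by applying `IsNLadder.exists_forall_le_imp_le` to `q` and the given elements of `I`. -/
theorem IsNLadder.exists_closureOperator_breadthLT {P L : Type*} [Lattice P] [SemilatticeSup L]
    {n : ℕ} (hP : IsNLadder P n) {I : Ideal P} (hI : I.IsProper) (φ : L ≃o I) :
    ∃ c : ClosureOperator L, BreadthLT c n := by
  obtain ⟨q, hq⟩ := (ne_univ_iff_exists_notMem _).1 hI.ne_univ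
  have hadj (x : L) : ∃ y, ∀ w, w ≤ y ↔ (φ w : P) ≤ (φ x : P) ⊔ q := by
    obtain ⟨y, hy, hmax⟩ := hP.exists_isGreatest_inter_Iic I (φ x).2 (le_sup_left (b := q))
    refine ⟨φ.symm ⟨y, hy.1⟩, fun w => φ.le_symm_apply.trans ⟨fun hw => ?_, fun hw => ?_⟩⟩
    · exact le_trans (b := y) hw hy.2
    · exact hmax ⟨(φ w).2, hw⟩
  choose c hc using hadj
  refine ⟨.mk₂ c (fun x => (hc x x).2 le_sup_left) fun x y hxy => (hc y _).2 ?_, fun x => ?_⟩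
  · exact ((hc x _).1 le_rfl).trans (sup_le ((hc y x).1 hxy) le_sup_right)
  obtain ⟨i, hi⟩ := hP.exists_forall_le_imp_le (ι := Option (Fin n)) (by simp)
    fun o => o.elim q fun i => φ (x i)
  cases i with
  | none =>
    have : Nonempty L := ⟨φ.symm ⟨_, I.nonempty.some_mem⟩⟩
    obtain ⟨u, hu⟩ := Finite.exists_le x
    refine absurd (I.lower (hi (φ u) ?_) (φ u).2) hq
    rintro (_ | j) hj
    · exact absurd rfl hj
    · exact φ.monotone (hu j)
  | some i =>
    refine ⟨i, fun u hu => (hc u _).2 (hi _ ?_)⟩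
    rintro (_ | j) hj
    · exact le_sup_right
    · exact le_sup_of_le_left (φ.monotone (hu j fun hji => hj (congrArg some hji)))

/-! ### Ordinal metrics and 2-ladders -/

section OrdinalMetric

variable {Ω : Type*} [LinearOrder Ω]

/-- The conditions of `IsOrdinalMetric` on the points below `c`, separated out because they are
proved by induction on `c`. -/
structure IsOrdinalMetricAt (ρ : Ω → Ω → ℕ) (c : Ω) : Prop where
  le_max_of_le_of_le : ∀ {a b}, a ≤ b → b ≤ c → ρ a c ≤ max (ρ a b) (ρ b c)
  le_max_of_common_bound : ∀ {a b}, a ≤ b → b ≤ c → ρ a b ≤ max (ρ a c) (ρ b c)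
  finite_ball : ∀ n, {a | a ≤ c ∧ ρ a c ≤ n}.Finite

/-- Todorcevic's ordinal metrics. Only the values `ρ a b` with `a ≤ b` matter. Equivalently, each
relation `a ≤ b ∧ ρ a b ≤ n` is a tree order with finite sets of predecessors and root `⊥`. -/
structure IsOrdinalMetric [OrderBot Ω] (ρ : Ω → Ω → ℕ) : Prop where
  self : ∀ a, ρ a a = 0
  bot_left : ∀ a, ρ ⊥ a = 0
  isOrdinalMetricAt : ∀ c, IsOrdinalMetricAt ρ c

section Existence

variable [OrderBot Ω] [WellFoundedLT Ω] {g : Ω → Ω → ℕ}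

open Classical in
/-- An ordinal metric obtained by recursion on the second argument from injections
`g b : Iio b → ℕ`. Call `c < b` an anchor for `n` if `g b c ≤ n` and `c` is within distance `n` of
every `d < b` that `g b` lists no later than `c`. The anchors form a finite chain in the `n`-th tree
order, and apart from `⊥` and `b` the ball of radius `n` around `b` is the downward closure of this
chain. -/
noncomputable def ordinalMetric {Ω : Type*} [LinearOrder Ω] [OrderBot Ω] [WellFoundedLT Ω]
    (g : Ω → Ω → ℕ) (a b : Ω) : ℕ :=
  if a = ⊥ ∨ b ≤ a then 0
  else sInf {n | ∃ c, ∃ _ : c < b, a ≤ c ∧ ordinalMetric g a c ≤ n ∧ g b c ≤ n ∧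
    ∀ d, ∀ _ : d < b, g b d ≤ g b c → ordinalMetric g c d ≤ n ∧ ordinalMetric g d c ≤ n}
termination_by wellFounded_lt.wrap b

theorem ordinalMetric_self (a : Ω) : ordinalMetric g a a = 0 := by
  rw [ordinalMetric, if_pos (Or.inr le_rfl)]

theorem ordinalMetric_bot_left (b : Ω) : ordinalMetric g ⊥ b = 0 := by
  rw [ordinalMetric, if_pos (Or.inl rfl)]

theorem ordinalMetric_le_iff (hg : ∀ b, InjOn (g b) (Iio b)) {a b : Ω} (ha : a ≠ ⊥) (hab : a < b)
    {n : ℕ} : ordinalMetric g a b ≤ n ↔ ∃ c < b, a ≤ c ∧ ordinalMetric g a c ≤ n ∧ g b c ≤ n ∧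
      ∀ d < b, g b d ≤ g b c → ordinalMetric g c d ≤ n ∧ ordinalMetric g d c ≤ n := by
  rw [ordinalMetric, if_neg (not_or.2 ⟨ha, hab.not_ge⟩)]
  simp only [exists_prop]
  refine ⟨fun hn => ?_, fun hn => Nat.sInf_le hn⟩
  have hfinite := finite_setOf_mem_and_le_of_injOn (hg b) (g b a)
  obtain ⟨M, hM⟩ := (hfinite.image (ordinalMetric g a)).bddAbove
  obtain ⟨N, hN⟩ := (hfinite.image (ordinalMetric g · a)).bddAbove
  obtain ⟨c, hcb, hac, hρ, hgc, hc⟩ := Nat.sInf_mem (s := {n | ∃ c < b, a ≤ c ∧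
      ordinalMetric g a c ≤ n ∧ g b c ≤ n ∧ ∀ d < b, g b d ≤ g b c →
        ordinalMetric g c d ≤ n ∧ ordinalMetric g d c ≤ n})
    ⟨max (g b a) (max M N), a, hab, le_rfl, by simp [ordinalMetric_self], le_max_left _ _,
      fun d hd hgd => ⟨le_max_of_le_right (le_max_of_le_left (hM ⟨d, ⟨hd, hgd⟩, rfl⟩)),
        le_max_of_le_right (le_max_of_le_right (hN ⟨d, ⟨hd, hgd⟩, rfl⟩))⟩⟩
  exact ⟨c, hcb, hac, hρ.trans hn, hgc.trans hn,
    fun d hd hgd => ⟨(hc d hd hgd).1.trans hn, (hc d hd hgd).2.trans hn⟩⟩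

theorem exists_common_anchor (hg : ∀ b, InjOn (g b) (Iio b)) {a b c : Ω}
    (hbelow : ∀ d < c, IsOrdinalMetricAt (ordinalMetric g) d) (ha : a ≠ ⊥) (hb : b ≠ ⊥)
    (hac : a < c) (hbc : b < c) {n : ℕ} (hρa : ordinalMetric g a c ≤ n)
    (hρb : ordinalMetric g b c ≤ n) :
    ∃ d < c, a ≤ d ∧ b ≤ d ∧ ordinalMetric g a d ≤ n ∧ ordinalMetric g b d ≤ n := by
  obtain ⟨d, hdc, had, hρad, -, hd⟩ := (ordinalMetric_le_iff hg ha hac).1 hρa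
  obtain ⟨e, hec, hbe, hρbe, -, he⟩ := (ordinalMetric_le_iff hg hb hbc).1 hρb
  have hde : ordinalMetric g d e ≤ n ∧ ordinalMetric g e d ≤ n :=
    (le_total (g c e) (g c d)).elim (hd e hec) fun h => (he d hdc h).symm
  rcases le_total d e with hle | hle
  · exact ⟨e, hec, had.trans hle, hbe,
      ((hbelow e hec).le_max_of_le_of_le had hle).trans (max_le hρad hde.1), hρbe⟩
  · exact ⟨d, hdc, had, hbe.trans hle, hρad,
      ((hbelow d hdc).le_max_of_le_of_le hbe hle).trans (max_le hρbe hde.2)⟩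

theorem isOrdinalMetricAt_ordinalMetric (hg : ∀ b, InjOn (g b) (Iio b)) (c : Ω) :
    IsOrdinalMetricAt (ordinalMetric g) c := by
  induction c using WellFoundedLT.induction with
  | ind c hbelow =>
    refine ⟨fun {a b} hab hbc => ?_, fun {a b} hab hbc => ?_, fun n => ?_⟩
    · rcases hbc.eq_or_lt with rfl | hbc
      · exact le_max_left _ _
      rcases eq_or_ne a ⊥ with rfl | ha
      · simp [ordinalMetric_bot_left]
      obtain ⟨d, hdc, hbd, hρbd, hgd, hd⟩ :=
        (ordinalMetric_le_iff hg (ne_bot_of_le_ne_bot ha hab) hbc).1 (le_max_right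
          (ordinalMetric g a b) _)
      exact (ordinalMetric_le_iff hg ha (hab.trans_lt hbc)).2 ⟨d, hdc, hab.trans hbd,
        ((hbelow d hdc).le_max_of_le_of_le hab hbd).trans (max_le (le_max_left _ _) hρbd), hgd, hd⟩
    · rcases hbc.eq_or_lt with rfl | hbc
      · exact le_max_left _ _
      rcases eq_or_ne a ⊥ with rfl | ha
      · simp [ordinalMetric_bot_left]
      obtain ⟨d, hdc, -, hbd, hρa, hρb⟩ := exists_common_anchor hg hbelow ha
        (ne_bot_of_le_ne_bot ha hab) (hab.trans_lt hbc) hbc (le_max_left _ _) (le_max_right _ _)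
      exact ((hbelow d hdc).le_max_of_common_bound hab hbd).trans (max_le hρa hρb)
    · refine (((finite_setOf_mem_and_le_of_injOn (hg c) n).biUnion fun d hd =>
        (hbelow d hd.1).finite_ball n).union (toFinite {⊥, c})).subset ?_
      rintro a ⟨hac, hρ⟩
      by_cases hend : a = ⊥ ∨ a = c
      · exact Or.inr hend
      obtain ⟨ha, hne⟩ := not_or.1 hend
      obtain ⟨d, hdc, had, hρad, hgd, -⟩ :=
        (ordinalMetric_le_iff hg ha (hac.lt_of_ne hne)).1 hρ
      exact Or.inl (mem_biUnion (x := d) ⟨hdc, hgd⟩ ⟨had, hρad⟩)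

theorem exists_isOrdinalMetric_of_countable_Iio (hcount : ∀ b : Ω, (Iio b).Countable) :
    ∃ ρ : Ω → Ω → ℕ, IsOrdinalMetric ρ := by
  choose g hg using fun b => countable_iff_exists_injOn.1 (hcount b)
  exact ⟨ordinalMetric g, ordinalMetric_self, ordinalMetric_bot_left,
    isOrdinalMetricAt_ordinalMetric hg⟩

end Existence

/-- The 2-ladder of an ordinal metric on `Ω`: the set `Ω × ℕ`, where `(a, m) ≤ (b, n)` if `m ≤ n`
and `a` precedes `b` in the `n`-th tree order. -/
@[ext] structure OrdinalMetricLadder [OrderBot Ω] {ρ : Ω → Ω → ℕ} (hρ : IsOrdinalMetric ρ) where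
  base : Ω
  height : ℕ

namespace OrdinalMetricLadder

variable [OrderBot Ω] {ρ : Ω → Ω → ℕ} {hρ : IsOrdinalMetric ρ}

instance : PartialOrder (OrdinalMetricLadder hρ) where
  le x y := x.base ≤ y.base ∧ x.height ≤ y.height ∧ ρ x.base y.base ≤ y.height
  le_refl x := ⟨le_rfl, le_rfl, by simp [hρ.self]⟩
  le_trans _ _ z hxy hyz := ⟨hxy.1.trans hyz.1, hxy.2.1.trans hyz.2.1,
    ((hρ.isOrdinalMetricAt z.base).le_max_of_le_of_le hxy.1 hyz.1).trans
      (max_le (hxy.2.2.trans hyz.2.1) hyz.2.2)⟩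
  le_antisymm _ _ hxy hyx :=
    OrdinalMetricLadder.ext (hxy.1.antisymm hyx.1) (hxy.2.1.antisymm hyx.2.1)

theorem isLUB_pair_of_base_le {x y : OrdinalMetricLadder hρ} (h : x.base ≤ y.base) :
    IsLUB {x, y} ⟨y.base, max (max x.height y.height) (ρ x.base y.base)⟩ := by
  refine ⟨?_, fun z hz => ?_⟩
  · rintro z (rfl | rfl)
    · exact ⟨h, by simp, by simp⟩
    · exact ⟨le_rfl, by simp, by simp [hρ.self]⟩
  · obtain ⟨⟨_, hxz, hρxz⟩, hyz, hhyz, hρyz⟩ := And.intro (hz (mem_insert x {y}))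
      (hz (mem_insert_of_mem x rfl))
    exact ⟨hyz, max_le (max_le hxz hhyz)
      (((hρ.isOrdinalMetricAt _).le_max_of_common_bound h hyz).trans (max_le hρxz hρyz)), hρyz⟩

theorem exists_isLUB_pair (x y : OrdinalMetricLadder hρ) : ∃ z, IsLUB {x, y} z :=
  (le_total x.base y.base).elim (fun h => ⟨_, isLUB_pair_of_base_le h⟩)
    fun h => ⟨_, pair_comm x y ▸ isLUB_pair_of_base_le h⟩

instance : OrderBot (OrdinalMetricLadder hρ) where
  bot := ⟨⊥, 0⟩
  bot_le x := ⟨bot_le, zero_le, by simp [hρ.bot_left]⟩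

theorem finite_Iic (x : OrdinalMetricLadder hρ) : (Iic x).Finite := by
  have hball := (hρ.isOrdinalMetricAt x.base).finite_ball x.height
  refine ((hball.prod (Set.finite_Iic x.height)).image fun p => ⟨p.1, p.2⟩).subset fun y hy => ?_
  exact ⟨(y.base, y.height), ⟨⟨hy.1, hy.2.2⟩, hy.2.1⟩, rfl⟩

noncomputable instance : SemilatticeSup (OrdinalMetricLadder hρ) where
  sup x y := (exists_isLUB_pair x y).choose
  le_sup_left x y := (exists_isLUB_pair x y).choose_spec.1 (by simp)
  le_sup_right x y := (exists_isLUB_pair x y).choose_spec.1 (by simp)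
  sup_le x y z hxz hyz := (exists_isLUB_pair x y).choose_spec.2 (by simp [hxz, hyz])

noncomputable instance : Lattice (OrdinalMetricLadder hρ) := latticeOfFiniteIic finite_Iic

theorem height_eq_of_covBy {x y : OrdinalMetricLadder hρ} (hyx : y ⋖ x) (hne : y.base ≠ x.base) :
    y.height = x.height := by
  let z : OrdinalMetricLadder hρ := ⟨y.base, x.height⟩
  have hyz : y ≤ z := ⟨le_rfl, hyx.le.2.1, by simp [z, hρ.self]⟩
  have hzx : z ≤ x := ⟨hyx.le.1, le_rfl, hyx.le.2.2⟩
  rcases hyx.eq_or_eq hyz hzx with hz | hz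
  · exact (congrArg height hz).symm
  · exact absurd (congrArg base hz) hne

theorem subsingleton_covBy_of_base_eq (x : OrdinalMetricLadder hρ) :
    {y | y ⋖ x ∧ y.base = x.base}.Subsingleton := by
  rintro y ⟨hy, hyb⟩ z ⟨hz, hzb⟩
  have hle {v w : OrdinalMetricLadder hρ} (hvw : v.base = w.base) (h : v.height ≤ w.height) :
      v ≤ w := ⟨hvw.le, h, by simp [hvw, hρ.self]⟩
  rcases le_total y.height z.height with h | h
  · exact eq_of_le_of_covBy hy hz (hle (hyb.trans hzb.symm) h)
  · exact (eq_of_le_of_covBy hz hy (hle (hzb.trans hyb.symm) h)).symm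

theorem subsingleton_covBy_of_base_ne (x : OrdinalMetricLadder hρ) :
    {y | y ⋖ x ∧ y.base ≠ x.base}.Subsingleton := by
  have hle {v w : OrdinalMetricLadder hρ} (hv : v ⋖ x) (hw : w ⋖ x)
      (hwb : w.base ≠ x.base) (hvw : v.base ≤ w.base) : v ≤ w := by
    have hρvw := (hρ.isOrdinalMetricAt x.base).le_max_of_common_bound hvw hw.le.1
    have hhw := height_eq_of_covBy hw hwb
    exact ⟨hvw, hv.le.2.1.trans hhw.ge, (hρvw.trans (max_le hv.le.2.2 hw.le.2.2)).trans hhw.ge⟩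
  rintro y ⟨hy, hyb⟩ z ⟨hz, hzb⟩
  rcases le_total y.base z.base with h | h
  · exact eq_of_le_of_covBy hy hz (hle hy hz hzb h)
  · exact (eq_of_le_of_covBy hz hy (hle hz hy hyb h)).symm

theorem isNLadder_two : IsNLadder (OrdinalMetricLadder hρ) 2 := by
  refine ⟨⟨⊥⟩, finite_Iic, fun x => ?_⟩
  exact ncard_le_add_one_of_subsingleton_sep (subsingleton_covBy_of_base_eq x)
    (ncard_le_one_of_subsingleton (subsingleton_covBy_of_base_ne x))

theorem mk_eq [Infinite Ω] : #(OrdinalMetricLadder hρ) = #Ω := by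
  let e : OrdinalMetricLadder hρ ≃ Ω × ℕ :=
    ⟨fun x => (x.base, x.height), fun p => ⟨p.1, p.2⟩, fun _ => rfl, fun _ => rfl⟩
  rw [mk_congr e, mk_prod, lift_uzero, mk_nat, lift_aleph0]
  exact mul_aleph0_eq (aleph0_le_mk Ω)

end OrdinalMetricLadder

end OrdinalMetric

theorem countable_Iio_toType_ord_aleph_one (b : (aleph 1).ord.ToType) : (Iio b).Countable := by
  have hlt : #(Iio b) < ℵ₁ := by simpa using mk_Iio_lt b (by simp)
  exact le_aleph0_iff_set_countable.1 (lt_succ_iff.1 (hlt.trans_eq succ_aleph0.symm))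

theorem exists_isNLadder_two_mk_eq_aleph_one :
    ∃ (K : Type*) (_ : Lattice K), IsNLadder K 2 ∧ #K = ℵ₁ := by
  let Ω := (aleph 1).ord.ToType
  have hΩ : #Ω = ℵ₁ := mk_ord_toType _
  have : Infinite Ω := infinite_iff.2 (hΩ ▸ aleph0_le_aleph 1)
  let _ : OrderBot Ω := WellFoundedLT.toOrderBot _
  obtain ⟨ρ, hρ⟩ := exists_isOrdinalMetric_of_countable_Iio countable_Iio_toType_ord_aleph_one
  exact ⟨OrdinalMetricLadder hρ, inferInstance, OrdinalMetricLadder.isNLadder_two,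
    OrdinalMetricLadder.mk_eq.trans hΩ⟩

/-! ### Guessing functions -/

theorem uncountable_of_mk_eq_aleph_one {K : Type*} (hK : #K = ℵ₁) : Uncountable K :=
  aleph0_lt_mk_iff.1 (hK ▸ aleph0_lt_aleph_one)

theorem exists_forall_countable_exists_injOn_of_mk_eq_aleph_one {K : Type*}
    (hK : #K = ℵ₁) :
    ∃ e : K → K → ℕ, ∀ s : Set K, s.Countable → ∃ q, InjOn (e q) s := by
  let Ω := (aleph 1).ord.ToType
  have hΩ : #Ω = ℵ₁ := mk_ord_toType _
  have : Uncountable Ω := uncountable_of_mk_eq_aleph_one hΩ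
  obtain ⟨ψ⟩ : Nonempty (K ≃ Ω) := Cardinal.eq.1 (hK.trans hΩ.symm)
  have hIic (b : Ω) : (Iic b).Countable := by
    rw [← Iio_insert]
    exact (countable_Iio_toType_ord_aleph_one b).insert b
  choose f hf using fun b => countable_iff_exists_injOn.1 (hIic b)
  refine ⟨fun q z => f (ψ q) (ψ z), fun s hs => ?_⟩
  obtain ⟨b, hb⟩ := exists_forall_not_le_of_countable_Iic hIic (hs.image ψ)
  refine ⟨ψ.symm b, fun x hx y hy hxy => ψ.injective ?_⟩
  have hle {z : K} (hz : z ∈ s) : ψ z ≤ b := (not_le.1 (hb _ (mem_image_of_mem ψ hz))).le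
  exact hf b (hle hx) (hle hy) (by simpa using hxy)

theorem tendsto_atTop_of_injOn_range {ι α : Type*} {l : Filter ι} {x : ι → α} {f : α → ℕ}
    (hf : InjOn f (range x)) (hx : Tendsto x l cofinite) : Tendsto (fun i => f (x i)) l atTop := by
  refine tendsto_atTop.2 fun k => ?_
  have hfar := hx.eventually (finite_setOf_mem_and_le_of_injOn hf k).compl_mem_cofinite
  exact hfar.mono fun i hi => not_lt.1 fun hlt => hi ⟨mem_range_self i, hlt.le⟩

theorem IsDominating.exists_eventually_lt_comp {D : Set (ℕ → ℕ)} (hD : IsDominating D)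
    {e : ℕ → ℕ} (he : Tendsto e atTop atTop) : ∃ g ∈ D, ∀ᶠ m in atTop, m < g (e m) := by
  have hfiber (k : ℕ) : {m | e m ≤ k}.Finite := by
    simpa using (Nat.cofinite_eq_atTop ▸ he.eventually_gt_atTop k : ∀ᶠ m in cofinite, k < e m)
  obtain ⟨g, hgD, hg⟩ := hD fun k => sSup {m | e m ≤ k}
  refine ⟨g, hgD, (he.eventually hg).mono fun m hm => ?_⟩
  exact (le_csSup (hfiber (e m)).bddAbove (le_refl (e m))).trans_lt hm

/-- Every sequence in `K` that tends to infinity is eventually outgrown, in the sense that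
`m < t q (x m)`, by one of the functions `t q : K → ℕ`. -/
def IsGuessing {K : Type*} (t : K → K → ℕ) : Prop :=
  ∀ x : ℕ → K, Tendsto x atTop cofinite → ∃ q, ∀ᶠ m in atTop, m < t q (x m)

theorem IsDominating.exists_isGuessing {K : Type*} {D : Set (ℕ → ℕ)} (hD : IsDominating D)
    (hDcard : #D = ℵ₁) (hK : #K = ℵ₁) : ∃ t : K → K → ℕ, IsGuessing t := by
  obtain ⟨e, he⟩ := exists_forall_countable_exists_injOn_of_mk_eq_aleph_one hK
  obtain ⟨Φ⟩ : Nonempty (K ≃ K × D) := Cardinal.eq.1 (by simp [hK, hDcard])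
  refine ⟨fun q z => (Φ q).2.1 (e (Φ q).1 z), fun x hx => ?_⟩
  obtain ⟨q, hq⟩ := he (range x) (countable_range x)
  obtain ⟨g, hgD, hg⟩ := hD.exists_eventually_lt_comp (tendsto_atTop_of_injOn_range hq hx)
  exact ⟨Φ.symm (q, ⟨g, hgD⟩), by simpa using hg⟩

/-! ### Epigraphs -/

/-- The points of `K × ℕ` on or above the graph of `r`, ordered componentwise. Over an
`n`-ladder `K` this is an `(n + 1)`-ladder, and a fast growing `r` makes it hard to extend. -/
@[ext] structure Epigraph {K : Type*} [Preorder K] (r : K →o ℕ) where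
  base : K
  height : ℕ
  le_height : r base ≤ height

namespace Epigraph

section PartialOrder

variable {K : Type*} [PartialOrder K] {r : K →o ℕ}

instance : PartialOrder (Epigraph r) :=
  PartialOrder.lift (fun x => (x.base, x.height)) fun _ _ h =>
    Epigraph.ext (congrArg Prod.fst h) (congrArg Prod.snd h)

/-- The point of the epigraph over `y` at height `m`, or at the least possible height over `y` if
`m` is too small. -/
def point (r : K →o ℕ) (y : K) (m : ℕ) : Epigraph r := ⟨y, max m (r y), le_max_right _ _⟩

theorem point_le_iff {y : K} {m : ℕ} {x : Epigraph r} :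
    point r y m ≤ x ↔ y ≤ x.base ∧ m ≤ x.height :=
  ⟨fun h => ⟨h.1, (le_max_left _ _).trans h.2⟩,
    fun h => ⟨h.1, max_le h.2 ((r.monotone h.1).trans x.le_height)⟩⟩

theorem point_mono {y z : K} {m n : ℕ} (hyz : y ≤ z) (hmn : m ≤ n) : point r y m ≤ point r z n :=
  point_le_iff.2 ⟨hyz, hmn.trans (le_max_left _ _)⟩

theorem finite_Iic (hK : ∀ x : K, (Iic x).Finite) (x : Epigraph r) : (Iic x).Finite :=
  Finite.of_finite_image (f := fun y => (y.base, y.height))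
    (((hK x.base).prod (Set.finite_Iic x.height)).subset (image_subset_iff.2 fun _ hy => hy))
    fun _ _ _ _ h => Epigraph.ext (congrArg Prod.fst h) (congrArg Prod.snd h)

theorem mk_eq [Infinite K] : #(Epigraph r) = #K := by
  refine le_antisymm ?_ (mk_le_of_injective (f := fun y => point r y 0) fun _ _ => congrArg base)
  calc #(Epigraph r) ≤ #(K × ℕ) := mk_le_of_injective (f := fun x => (x.base, x.height))
        fun _ _ h => Epigraph.ext (congrArg Prod.fst h) (congrArg Prod.snd h)
    _ = #K := by
      rw [mk_prod, lift_uzero, mk_nat, lift_aleph0, mul_aleph0_eq (aleph0_le_mk K)]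

theorem subsingleton_covBy_of_base_eq (x : Epigraph r) :
    {y | y ⋖ x ∧ y.base = x.base}.Subsingleton := by
  rintro y ⟨hy, hyb⟩ z ⟨hz, hzb⟩
  rcases le_total y.height z.height with h | h
  · exact eq_of_le_of_covBy hy hz ⟨(hyb.trans hzb.symm).le, h⟩
  · exact (eq_of_le_of_covBy hz hy ⟨(hzb.trans hyb.symm).le, h⟩).symm

theorem height_eq_of_covBy {x y : Epigraph r} (hyx : y ⋖ x) (hne : y.base ≠ x.base) :
    y.height = x.height := by
  let z : Epigraph r := ⟨y.base, x.height, y.le_height.trans hyx.le.2⟩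
  rcases hyx.eq_or_eq (c := z) ⟨le_rfl, hyx.le.2⟩ ⟨hyx.le.1, le_rfl⟩ with hz | hz
  · exact (congrArg height hz).symm
  · exact absurd (congrArg base hz) hne

theorem base_covBy_of_covBy {x y : Epigraph r} (hyx : y ⋖ x) (hne : y.base ≠ x.base) :
    y.base ⋖ x.base := by
  refine ⟨hyx.le.1.lt_of_ne hne, fun a hya hax => ?_⟩
  let z : Epigraph r := ⟨a, x.height, (r.monotone hax.le).trans x.le_height⟩
  rcases hyx.eq_or_eq (c := z) ⟨hya.le, hyx.le.2⟩ ⟨hax.le, le_rfl⟩ with hz | hz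
  · exact hya.ne' (congrArg base hz)
  · exact hax.ne (congrArg base hz)

end PartialOrder

variable {K : Type*} [Lattice K] {r : K →o ℕ}

instance : Lattice (Epigraph r) where
  sup x y := point r (x.base ⊔ y.base) (max x.height y.height)
  le_sup_left _ _ := ⟨le_sup_left, le_max_of_le_left (le_max_left _ _)⟩
  le_sup_right _ _ := ⟨le_sup_right, le_max_of_le_left (le_max_right _ _)⟩
  sup_le _ _ _ hxz hyz := point_le_iff.2 ⟨sup_le hxz.1 hyz.1, max_le hxz.2 hyz.2⟩
  inf x y := ⟨x.base ⊓ y.base, min x.height y.height,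
    le_min ((r.monotone inf_le_left).trans x.le_height)
      ((r.monotone inf_le_right).trans y.le_height)⟩
  inf_le_left _ _ := ⟨inf_le_left, min_le_left _ _⟩
  inf_le_right _ _ := ⟨inf_le_right, min_le_right _ _⟩
  le_inf _ _ _ hxy hxz := ⟨le_inf hxy.1 hxz.1, le_min hxy.2 hxz.2⟩

theorem isNLadder_add_one {n : ℕ} (hK : IsNLadder K n) : IsNLadder (Epigraph r) (n + 1) := by
  refine ⟨hK.1.map fun y => point r y 0, finite_Iic hK.finite_Iic, fun x => ?_⟩
  refine ncard_le_add_one_of_subsingleton_sep (subsingleton_covBy_of_base_eq x) ?_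
  refine (ncard_le_ncard_of_injOn base (fun y hy => base_covBy_of_covBy hy.1 hy.2) ?_
    (hK.finite_setOf_covBy x.base)).trans (hK.2.2 x.base)
  intro y hy z hz hyz
  exact Epigraph.ext hyz
    ((height_eq_of_covBy hy.1 hy.2).trans (height_eq_of_covBy hz.1 hz.2).symm)

/-- If the bases of `c (point r y m)` were unbounded as `m` grows, some `t q` would outgrow them.
A closed point above `point r q 0` whose height `m` is large is then above `c (point r y m)`, and
the epigraph condition forces its height to exceed `m`. -/
theorem exists_forall_base_closure_point_le (c : ClosureOperator (Epigraph r)) {t : K → K → ℕ}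
    (ht : IsGuessing t) (htr : ∀ x, ∀ y ≤ x, ∀ z ≤ x, t y z ≤ r x) (y : K) :
    ∃ B, ∀ m, (c (point r y m)).base ≤ B := by
  by_contra! hunbounded
  have hmono : Monotone fun m => (c (point r y m)).base :=
    fun m n hmn => (c.monotone (point_mono le_rfl hmn)).1
  obtain ⟨q, hq⟩ := ht _ (tendsto_cofinite_of_monotone_of_unbounded hmono hunbounded)
  obtain ⟨M, hM⟩ := eventually_atTop.1 hq
  let u := c (point r q 0 ⊔ point r y M)
  obtain ⟨hqu, hyu⟩ := sup_le_iff.1 (c.le_closure (point r q 0 ⊔ point r y M))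
  have hcu : c (point r y u.height) ≤ u :=
    (c.isClosed_closure _).closure_le_iff.2 (point_le_iff.2 ⟨hyu.1, le_rfl⟩)
  have hlt : u.height < t q (c (point r y u.height)).base := hM _ (point_le_iff.1 hyu).2
  exact (hlt.trans_le (htr _ _ hqu.1 _ hcu.1)).not_ge u.le_height

theorem le_or_le_of_breadthLT_three {c : ClosureOperator (Epigraph r)} (hc : BreadthLT c 3)
    {B : K → K} (hB : ∀ y m, (c (point r y m)).base ≤ B y) (y z : K) : z ≤ B y ∨ y ≤ B z := by
  let m := (c (point r y 0 ⊔ point r z 0)).height + 1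
  obtain ⟨i, hi⟩ := hc ![point r y 0, point r z 0, point r (y ⊓ z) m]
  fin_cases i
  · refine Or.inr ((hi (point r z m) ?_).1.trans (hB z m))
    intro j hj
    fin_cases j
    · exact absurd rfl hj
    · exact point_mono le_rfl zero_le
    · exact point_mono inf_le_right le_rfl
  · refine Or.inl ((hi (point r y m) ?_).1.trans (hB y m))
    intro j hj
    fin_cases j
    · exact point_mono le_rfl zero_le
    · exact absurd rfl hj
    · exact point_mono inf_le_left le_rfl
  · refine absurd (point_le_iff.1 (hi (point r y 0 ⊔ point r z 0) ?_)).2 (Nat.lt_irrefl _)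
    intro j hj
    fin_cases j
    · exact le_sup_left
    · exact le_sup_right
    · exact absurd rfl hj

theorem not_breadthLT_three [Uncountable K] (hfin : ∀ x : K, (Iic x).Finite) {t : K → K → ℕ}
    (ht : IsGuessing t) (htr : ∀ x, ∀ y ≤ x, ∀ z ≤ x, t y z ≤ r x)
    (c : ClosureOperator (Epigraph r)) : ¬ BreadthLT c 3 := by
  intro hc
  choose B hB using exists_forall_base_closure_point_le c ht htr
  obtain ⟨y, z, hzy, hyz⟩ := exists_not_le_and_not_le_of_finite_Iic hfin B
  exact (le_or_le_of_breadthLT_three hc hB y z).elim hzy hyz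

end Epigraph

/-- if `𝔡 = ℵ₁`, i.e. there is a dominating family of functions
`ω → ω` of cardinality `ℵ₁`, then there exists a maximal 3-ladder of
cardinality `ℵ₁`. -/
theorem exists_maximal_three_ladder_of_d_eq_aleph_one
    (hd : ∃ D : Set (ℕ → ℕ), IsDominating D ∧ Cardinal.mk D = Cardinal.aleph 1) :
    ∃ (L : Type) (_ : Lattice L), IsMaximalNLadder L 3 ∧
      Cardinal.mk L = Cardinal.aleph 1 := by
  obtain ⟨D, hD, hDcard⟩ := hd
  obtain ⟨K, _, hK, hKcard⟩ := exists_isNLadder_two_mk_eq_aleph_one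
  have : Uncountable K := uncountable_of_mk_eq_aleph_one hKcard
  obtain ⟨t, ht⟩ := hD.exists_isGuessing hDcard hKcard
  obtain ⟨r, htr⟩ := exists_orderHom_forall_le_of_finite_Iic hK.finite_Iic t
  refine ⟨Epigraph r, inferInstance, ⟨Epigraph.isNLadder_add_one hK, ?_⟩,
    Epigraph.mk_eq.trans hKcard⟩
  rintro ⟨Q, _, I, hQ, hI, ⟨φ⟩⟩
  obtain ⟨c, hc⟩ := hQ.exists_closureOperator_breadthLT hI φ
  exact Epigraph.not_breadthLT_three hK.finite_Iic ht htr c hc
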